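/- For every integer n > 2^25, every positive integer N, and every n-linear form U : (ℂ^N)^n → ℂ, one has (∑_{i₁,…,iₙ=1}^N |U(e_{i₁},…,e_{iₙ})|^{2n/(n+1)})^{(n+1)/(2n)} ≤ 0.99135459597 · (n-1)^{0.304975} · ‖U‖. -/

import Mathlib

open Real

/-- The Bohnenblust--Hille quantity of an `n`-linear form on `ℓ_∞^N` over `ℂ`:
`(∑_{i₁,…,iₙ} |U(e_{i₁},…,e_{iₙ})|^{2n/(n+1)})^{(n+1)/(2n)}`. -/
noncomputable def BHcomplex (n N : ℕ)
    (U : ContinuousMultilinearMap ℂ (fun _ : Fin n => (Fin N → ℂ)) ℂ) : ℝ :=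
  (∑ i : Fin n → Fin N,
      ‖U (fun k => Pi.single (i k) (1 : ℂ))‖ ^ ((2 * n : ℝ) / (n + 1)))
    ^ ((n + 1 : ℝ) / (2 * n))

open Finset
open scoped BigOperators ComplexConjugate

/-!
The optimal constant grows by a factor of at most `exp (0.285 / n)` from `n` to `n + 1` variables,
so that it is at most `exp (0.285 * H_n)` for `n + 1` variables, where `H_n ≤ 1 + log n`.

A step replaces one argument of the form by a random vector with entries of modulus one. A
Khinchine inequality bounds the mixed `ℓ²`-norm of the coefficients in that variable by the average
`ℓ^p`-norm of the coefficients of the resulting form in `n` variables, `p = 2n / (n + 1)`, and a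
Blei-type inequality combines the `n + 1` mixed norms into the Bohnenblust–Hille quantity.

For the Khinchine inequality let `Z` be the normalized sum. A cubic upper bound for `log` gives
`𝔼 |Z|² log |Z|² ≤ 0.57`, and convexity of `exp` turns this into
`𝔼 |Z|^p ≥ exp (-0.57 * (1 - p / 2))`. Only `𝔼 |Z|^(2m)` with `m ≤ 4` enters, so Steinhaus
variables may be replaced by the values of a character of order five,
and all averages are finite sums.

The Blei-type inequality is an entropy inequality: Gibbs' inequality bounds each mixed norm below
by the entropies of a law on the indices and of its marginal, Shearer's inequality (itself Gibbs'
inequality against the Loomis–Whitney product) adds up the marginals, and the law proportional to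
`f ^ ρ` is the case of equality for the left-hand side.
-/

/-- The gap in the cubic upper bound for the logarithm; its local minima are at `5/4` and `4`. -/
noncomputable def cubicSubLog (x : ℝ) : ℝ :=
  -1.11 + 1.45 * x - 0.31 * x ^ 2 + 2 / 75 * x ^ 3 - log x

lemma hasDerivAt_cubicSubLog {x : ℝ} (hx : x ≠ 0) :
    HasDerivAt cubicSubLog (0.08 * ((x - 5 / 4) * (x - 5 / 2) * (x - 4)) / x) x := by
  have h := (((((hasDerivAt_id x).const_mul 1.45).const_add (-1.11)).sub
    ((hasDerivAt_pow 2 x).const_mul 0.31)).add ((hasDerivAt_pow 3 x).const_mul (2 / 75))).sub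
    (hasDerivAt_log hx)
  refine h.congr_deriv ?_
  simp only [Nat.cast_ofNat]
  field_simp
  ring

lemma monotoneOn_cubicSubLog {s : Set ℝ} (hs : Convex ℝ s) (hs0 : ∀ x ∈ s, 0 < x)
    (h : ∀ x ∈ s, 0 ≤ (x - 5 / 4) * (x - 5 / 2) * (x - 4)) : MonotoneOn cubicSubLog s :=
  monotoneOn_of_hasDerivWithinAt_nonneg hs
    (fun x hx => (hasDerivAt_cubicSubLog (hs0 x hx).ne').continuousAt.continuousWithinAt)
    (fun x hx => (hasDerivAt_cubicSubLog (hs0 x (interior_subset hx)).ne').hasDerivWithinAt)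
    fun x hx => div_nonneg (mul_nonneg (by norm_num) (h x (interior_subset hx)))
      (hs0 x (interior_subset hx)).le

lemma antitoneOn_cubicSubLog {s : Set ℝ} (hs : Convex ℝ s) (hs0 : ∀ x ∈ s, 0 < x)
    (h : ∀ x ∈ s, (x - 5 / 4) * (x - 5 / 2) * (x - 4) ≤ 0) : AntitoneOn cubicSubLog s :=
  antitoneOn_of_hasDerivWithinAt_nonpos hs
    (fun x hx => (hasDerivAt_cubicSubLog (hs0 x hx).ne').continuousAt.continuousWithinAt)
    (fun x hx => (hasDerivAt_cubicSubLog (hs0 x (interior_subset hx)).ne').hasDerivWithinAt)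
    fun x hx => div_nonpos_of_nonpos_of_nonneg
      (mul_nonpos_of_nonneg_of_nonpos (by norm_num) (h x (interior_subset hx)))
      (hs0 x (interior_subset hx)).le

lemma cubicSubLog_five_fourths_nonneg : 0 ≤ cubicSubLog (5 / 4) := by
  have h := log_le_sub_one_of_pos (show (0 : ℝ) < 5 / 4 by norm_num)
  unfold cubicSubLog
  linarith

lemma cubicSubLog_four_nonneg : 0 ≤ cubicSubLog 4 := by
  have h : log 4 = 2 * log 2 := by
    rw [show (4 : ℝ) = 2 ^ 2 by norm_num, log_pow, Nat.cast_ofNat]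
  have h2 := log_two_lt_d9
  unfold cubicSubLog
  linarith

lemma cubicSubLog_nonneg {x : ℝ} (hx : 0 < x) : 0 ≤ cubicSubLog x := by
  rcases le_total x (5 / 4) with h₁ | h₁
  · refine cubicSubLog_five_fourths_nonneg.trans (antitoneOn_cubicSubLog (convex_Ioc 0 (5 / 4))
      (fun y hy => hy.1) (fun y hy => ?_) ⟨hx, h₁⟩ (by norm_num) h₁)
    exact mul_nonpos_of_nonneg_of_nonpos (mul_nonneg_of_nonpos_of_nonpos
      (by linarith [hy.2]) (by linarith [hy.2])) (by linarith [hy.2])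
  rcases le_total x (5 / 2) with h₂ | h₂
  · refine cubicSubLog_five_fourths_nonneg.trans (monotoneOn_cubicSubLog
      (convex_Icc (5 / 4) (5 / 2)) (fun y hy => by linarith [hy.1]) (fun y hy => ?_)
      (by norm_num) ⟨h₁, h₂⟩ h₁)
    exact mul_nonneg_of_nonpos_of_nonpos (mul_nonpos_of_nonneg_of_nonpos
      (by linarith [hy.1]) (by linarith [hy.2])) (by linarith [hy.2])
  rcases le_total x 4 with h₃ | h₃
  · refine cubicSubLog_four_nonneg.trans (antitoneOn_cubicSubLog (convex_Icc (5 / 2) 4)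
      (fun y hy => by linarith [hy.1]) (fun y hy => ?_) ⟨h₂, h₃⟩ (by norm_num) h₃)
    exact mul_nonpos_of_nonneg_of_nonpos (mul_nonneg
      (by linarith [hy.1]) (by linarith [hy.1])) (by linarith [hy.2])
  · refine cubicSubLog_four_nonneg.trans (monotoneOn_cubicSubLog (convex_Ici 4)
      (fun y hy => by linarith [Set.mem_Ici.1 hy]) (fun y hy => ?_) Set.self_mem_Ici h₃ h₃)
    rw [Set.mem_Ici] at hy
    exact mul_nonneg (mul_nonneg (by linarith) (by linarith)) (by linarith)

lemma log_le_cubic {x : ℝ} (hx : 0 < x) :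
    log x ≤ -1.11 + 1.45 * x - 0.31 * x ^ 2 + 2 / 75 * x ^ 3 :=
  sub_nonneg.1 (cubicSubLog_nonneg hx)

lemma mul_log_le_quartic {x : ℝ} (hx : 0 ≤ x) :
    x * log x ≤ -1.11 * x + 1.45 * x ^ 2 - 0.31 * x ^ 3 + 2 / 75 * x ^ 4 := by
  rcases hx.eq_or_lt with rfl | hx
  · norm_num
  · linarith [mul_le_mul_of_nonneg_left (log_le_cubic hx) hx.le]

lemma expect_mul_log_le_moments {α : Type*} [Fintype α] {f : α → ℝ} (hf : ∀ x, 0 ≤ f x) :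
    𝔼 x, f x * log (f x) ≤ -1.11 * 𝔼 x, f x + 1.45 * 𝔼 x, f x ^ 2 - 0.31 * 𝔼 x, f x ^ 3
      + 2 / 75 * 𝔼 x, f x ^ 4 := by
  simp only [mul_expect, ← expect_add_distrib, ← expect_sub_distrib]
  exact expect_le_expect fun x _ => mul_log_le_quartic (hf x)

lemma power_sum_correction_nonneg {ι : Type*} [Fintype ι] {w : ι → ℝ} (hw : ∀ j, 0 ≤ w j)
    (h1 : ∑ j, w j = 1) :
    0 ≤ 0.58 * ∑ j, w j ^ 2 - 7 / 15 * ∑ j, w j ^ 3 - 0.48 * (∑ j, w j ^ 2) ^ 2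
      + 0.88 * ∑ j, w j ^ 4 := by
  have cauchy_schwarz : (∑ j, w j ^ 2) ^ 2 ≤ (∑ j, w j) * ∑ j, w j ^ 3 :=
    sum_sq_le_sum_mul_sum_of_sq_le_mul _ (fun j _ => hw j) (fun j _ => pow_nonneg (hw j) 3)
      fun j _ => le_of_eq (by ring)
  have pointwise : 0 ≤ ∑ j, (0.58 * w j ^ 2 - 71 / 75 * w j ^ 3 + 0.88 * w j ^ 4) := by
    refine sum_nonneg fun j _ => ?_
    have h : 0 ≤ 0.58 - 71 / 75 * w j + 0.88 * w j ^ 2 := by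
      linarith [sq_nonneg (w j - 71 / 132)]
    linarith [mul_nonneg (sq_nonneg (w j)) h]
  rw [sum_add_distrib, sum_sub_distrib, ← mul_sum, ← mul_sum, ← mul_sum] at pointwise
  rw [h1, one_mul] at cauchy_schwarz
  linarith

lemma exp_neg_mul_le_expect_rpow {α : Type*} [Fintype α] {f : α → ℝ} (hf : ∀ x, 0 ≤ f x)
    (hmean : 𝔼 x, f x = 1) {c s : ℝ} (hent : 𝔼 x, f x * log (f x) ≤ c) (hs : 0 ≤ s) :
    exp (-(c * s)) ≤ 𝔼 x, f x ^ (1 - s) := by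
  -- The tangent line to `exp` at `-(c * s)` bounds `y ^ (1 - s) = y * exp (-(s * log y))`.
  have tangent (x : α) :
      exp (-(c * s)) * (f x * (1 + s * c) - s * (f x * log (f x))) ≤ f x ^ (1 - s) := by
    rcases (hf x).eq_or_lt with h0 | hpos
    · simpa only [← h0, zero_mul, mul_zero, sub_zero] using rpow_nonneg le_rfl _
    calc exp (-(c * s)) * (f x * (1 + s * c) - s * (f x * log (f x)))
        = f x * exp (-(c * s)) * ((s * c - s * log (f x)) + 1) := by ring
      _ ≤ f x * exp (-(c * s)) * exp (s * c - s * log (f x)) := by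
          gcongr
          exact add_one_le_exp _
      _ = f x ^ (1 - s) := by
          rw [rpow_def_of_pos hpos, mul_assoc, ← exp_add]
          nth_rewrite 1 [← exp_log hpos]
          rw [← exp_add]
          congr 1
          ring
  calc exp (-(c * s))
      ≤ exp (-(c * s)) * (1 * (1 + s * c) - s * 𝔼 x, f x * log (f x)) :=
        le_mul_of_one_le_right (exp_nonneg _)
          (by linarith [mul_le_mul_of_nonneg_left hent hs])
    _ = 𝔼 x, exp (-(c * s)) * (f x * (1 + s * c) - s * (f x * log (f x))) := by
        rw [← mul_expect, expect_sub_distrib, ← mul_expect, ← expect_mul, hmean]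
    _ ≤ 𝔼 x, f x ^ (1 - s) := expect_le_expect fun x _ => tangent x

section CharacterSums

variable {G : Type*} [AddCommGroup G] [Fintype G] {κ ι : Type*}

lemma expect_mul_conj_addChar (ψ₁ ψ₂ : AddChar G ℂ) :
    𝔼 x, ψ₁ x * conj (ψ₂ x) = if ψ₁ = ψ₂ then 1 else 0 := by
  have h := AddChar.wInner_cWeight_eq_boole ψ₂ ψ₁
  rw [RCLike.wInner_cWeight_eq_expect] at h
  simpa only [RCLike.inner_apply, eq_comm] using h

lemma expect_norm_sum_mul_addChar_sq {ψ : κ → AddChar G ℂ} {s : Finset κ} (hψ : Set.InjOn ψ s)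
    (c : κ → ℂ) : 𝔼 x, ‖∑ j ∈ s, c j * ψ j x‖ ^ 2 = ∑ j ∈ s, ‖c j‖ ^ 2 := by
  classical
  have orthogonality : 𝔼 x, (∑ i ∈ s, c i * ψ i x) * conj (∑ j ∈ s, c j * ψ j x)
      = ∑ j ∈ s, c j * conj (c j) := by
    calc 𝔼 x, (∑ i ∈ s, c i * ψ i x) * conj (∑ j ∈ s, c j * ψ j x)
        = ∑ i ∈ s, ∑ j ∈ s, c i * conj (c j) * 𝔼 x, ψ i x * conj (ψ j x) := by
          simp only [map_sum, map_mul, sum_mul_sum, expect_sum_comm, mul_expect]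
          exact sum_congr rfl fun i _ => sum_congr rfl fun j _ =>
            expect_congr rfl fun x _ => by ring
      _ = ∑ i ∈ s, ∑ j ∈ s, if i = j then c i * conj (c j) else 0 := by
          refine sum_congr rfl fun i hi => sum_congr rfl fun j hj => ?_
          rw [expect_mul_conj_addChar, mul_ite, mul_one, mul_zero]
          simp only [hψ.eq_iff hi hj]
      _ = ∑ j ∈ s, c j * conj (c j) :=
          sum_congr rfl fun i hi => by rw [sum_ite_eq, if_pos hi]
  simp only [Complex.mul_conj'] at orthogonality
  rw [← Complex.ofReal_inj, Complex.ofReal_expect]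
  push_cast
  exact orthogonality

lemma expect_norm_add_mul_addChar_pow {χ : AddChar G ℂ} {m : ℕ} (hm : m < orderOf χ) (u a : ℂ) :
    𝔼 x, ‖u + a * χ x‖ ^ (2 * m)
      = ∑ i ∈ range (m + 1), (m.choose i : ℝ) ^ 2 * ‖u‖ ^ (2 * i) * ‖a‖ ^ (2 * (m - i)) := by
  have hinj : Set.InjOn (fun i => χ ^ (m - i)) (range (m + 1)) := by
    intro i hi j hj hij
    rw [mem_coe, mem_range] at hi hj
    have := pow_injOn_Iio_orderOf (Set.mem_Iio.2 <| (Nat.sub_le m i).trans_lt hm)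
      (Set.mem_Iio.2 <| (Nat.sub_le m j).trans_lt hm) hij
    omega
  calc 𝔼 x, ‖u + a * χ x‖ ^ (2 * m)
      = 𝔼 x, ‖∑ i ∈ range (m + 1), m.choose i * u ^ i * a ^ (m - i) * (χ ^ (m - i)) x‖ ^ 2 := by
        refine expect_congr rfl fun x _ => ?_
        rw [mul_comm 2 m, pow_mul, ← norm_pow, add_pow]
        congr 2
        refine sum_congr rfl fun i _ => ?_
        rw [AddChar.pow_apply, mul_pow]
        ring
    _ = _ := by
        rw [expect_norm_sum_mul_addChar_sq hinj]
        refine sum_congr rfl fun i _ => ?_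
        rw [norm_mul, norm_mul, norm_pow, norm_pow, Complex.norm_natCast, mul_pow, mul_pow,
          ← pow_mul, ← pow_mul, mul_comm i, mul_comm (m - i)]

variable [Fintype ι] [DecidableEq ι]

/-- The `2m`-th absolute moment of the character sum `∑ j ∈ s, a j * χ (ε j)`, where the entries
of `ε` are independent and uniform on `G`. For small `m` these are the moments of a sum of
independent Steinhaus variables. -/
noncomputable def charSumMoment (χ : AddChar G ℂ) (a : ι → ℂ) (s : Finset ι) (m : ℕ) : ℝ :=
  𝔼 ε : ι → G, ‖∑ j ∈ s, a j * χ (ε j)‖ ^ (2 * m)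

lemma charSumMoment_zero (χ : AddChar G ℂ) (a : ι → ℂ) (s : Finset ι) :
    charSumMoment χ a s 0 = 1 := by
  simp [charSumMoment]

lemma charSumMoment_empty (χ : AddChar G ℂ) (a : ι → ℂ) {m : ℕ} (hm : m ≠ 0) :
    charSumMoment χ a ∅ m = 0 := by
  simp [charSumMoment, hm]

lemma charSumMoment_insert {χ : AddChar G ℂ} {m : ℕ} (hm : m < orderOf χ) (a : ι → ℂ)
    {s : Finset ι} {j : ι} (hj : j ∉ s) :
    charSumMoment χ a (insert j s) m
      = ∑ i ∈ range (m + 1),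
          (m.choose i : ℝ) ^ 2 * charSumMoment χ a s i * ‖a j‖ ^ (2 * (m - i)) := by
  -- The uniform distribution is invariant under resampling the `j`-th entry by a shift.
  have shift (x : G) : charSumMoment χ a (insert j s) m
      = 𝔼 ε : ι → G, ‖∑ l ∈ s, a l * χ (ε l) + a j * χ (ε j) * χ x‖ ^ (2 * m) := by
    refine Fintype.expect_equiv (Equiv.subRight (Pi.single j x)) _ _ fun ε => ?_
    have hs : ∑ l ∈ s, a l * χ ((ε - Pi.single j x : ι → G) l) = ∑ l ∈ s, a l * χ (ε l) :=
      sum_congr rfl fun l hl => by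
        rw [Pi.sub_apply, Pi.single_eq_of_ne (ne_of_mem_of_not_mem hl hj), sub_zero]
    rw [Equiv.subRight_apply, hs, mul_assoc, ← AddChar.map_add_eq_mul, Pi.sub_apply,
      Pi.single_eq_same, sub_add_cancel, sum_insert hj, add_comm]
  calc charSumMoment χ a (insert j s) m
      = 𝔼 ε : ι → G, 𝔼 x, ‖∑ l ∈ s, a l * χ (ε l) + a j * χ (ε j) * χ x‖ ^ (2 * m) := by
        rw [expect_comm, ← Fintype.expect_const (ι := G) (charSumMoment χ a (insert j s) m)]
        exact expect_congr rfl fun x _ => shift x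
    _ = 𝔼 ε : ι → G, ∑ i ∈ range (m + 1), (m.choose i : ℝ) ^ 2
          * ‖∑ l ∈ s, a l * χ (ε l)‖ ^ (2 * i) * ‖a j‖ ^ (2 * (m - i)) := by
        refine expect_congr rfl fun ε _ => ?_
        rw [expect_norm_add_mul_addChar_pow hm, norm_mul, AddChar.norm_apply, mul_one]
    _ = _ := by
        rw [expect_sum_comm]
        exact sum_congr rfl fun i _ => by rw [charSumMoment, mul_expect, expect_mul]

lemma charSumMoment_one {χ : AddChar G ℂ} (hχ : 1 < orderOf χ) (a : ι → ℂ) (s : Finset ι) :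
    charSumMoment χ a s 1 = ∑ j ∈ s, ‖a j‖ ^ 2 := by
  induction s using Finset.induction_on with
  | empty => simp only [charSumMoment_empty _ _ one_ne_zero, sum_empty]
  | insert j s hj ih =>
    rw [charSumMoment_insert hχ a hj, sum_insert hj, ← ih]
    simp [sum_range_succ, charSumMoment_zero]

lemma charSumMoment_two {χ : AddChar G ℂ} (hχ : 2 < orderOf χ) (a : ι → ℂ) (s : Finset ι) :
    charSumMoment χ a s 2 = 2 * (∑ j ∈ s, ‖a j‖ ^ 2) ^ 2 - ∑ j ∈ s, ‖a j‖ ^ 4 := by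
  induction s using Finset.induction_on with
  | empty => simp [charSumMoment_empty]
  | insert j s hj ih =>
    rw [charSumMoment_insert hχ a hj]
    simp only [sum_range_succ, range_zero, sum_empty, charSumMoment_zero,
      charSumMoment_one (show 1 < orderOf χ by omega), ih, sum_insert hj]
    norm_num [Nat.choose]
    ring

lemma charSumMoment_three {χ : AddChar G ℂ} (hχ : 3 < orderOf χ) (a : ι → ℂ) (s : Finset ι) :
    charSumMoment χ a s 3 = 6 * (∑ j ∈ s, ‖a j‖ ^ 2) ^ 3
      - 9 * (∑ j ∈ s, ‖a j‖ ^ 2) * (∑ j ∈ s, ‖a j‖ ^ 4) + 4 * ∑ j ∈ s, ‖a j‖ ^ 6 := by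
  induction s using Finset.induction_on with
  | empty => simp [charSumMoment_empty]
  | insert j s hj ih =>
    rw [charSumMoment_insert hχ a hj]
    simp only [sum_range_succ, range_zero, sum_empty, charSumMoment_zero,
      charSumMoment_one (show 1 < orderOf χ by omega),
      charSumMoment_two (show 2 < orderOf χ by omega), ih, sum_insert hj]
    norm_num [Nat.choose]
    ring

lemma charSumMoment_four {χ : AddChar G ℂ} (hχ : 4 < orderOf χ) (a : ι → ℂ) (s : Finset ι) :
    charSumMoment χ a s 4 = 24 * (∑ j ∈ s, ‖a j‖ ^ 2) ^ 4
      - 72 * (∑ j ∈ s, ‖a j‖ ^ 2) ^ 2 * (∑ j ∈ s, ‖a j‖ ^ 4)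
      + 64 * (∑ j ∈ s, ‖a j‖ ^ 2) * (∑ j ∈ s, ‖a j‖ ^ 6)
      + 18 * (∑ j ∈ s, ‖a j‖ ^ 4) ^ 2 - 33 * ∑ j ∈ s, ‖a j‖ ^ 8 := by
  induction s using Finset.induction_on with
  | empty => simp [charSumMoment_empty]
  | insert j s hj ih =>
    rw [charSumMoment_insert hχ a hj]
    simp only [sum_range_succ, range_zero, sum_empty, charSumMoment_zero,
      charSumMoment_one (show 1 < orderOf χ by omega),
      charSumMoment_two (show 2 < orderOf χ by omega),
      charSumMoment_three (show 3 < orderOf χ by omega), ih, sum_insert hj]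
    norm_num [Nat.choose]
    ring

lemma expect_normSq_mul_log_normSq_charSum_le {χ : AddChar G ℂ} (hχ : 4 < orderOf χ) {a : ι → ℂ}
    (ha : ∑ j, ‖a j‖ ^ 2 = 1) :
    𝔼 ε : ι → G, ‖∑ j, a j * χ (ε j)‖ ^ 2 * log (‖∑ j, a j * χ (ε j)‖ ^ 2) ≤ 0.57 := by
  have h1 := charSumMoment_one (show 1 < orderOf χ by omega) a univ
  have h2 := charSumMoment_two (show 2 < orderOf χ by omega) a univ
  have h3 := charSumMoment_three (show 3 < orderOf χ by omega) a univ
  have h4 := charSumMoment_four hχ a univ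
  simp only [charSumMoment, ha] at h1 h2 h3 h4
  refine (expect_mul_log_le_moments fun ε => sq_nonneg _).trans ?_
  -- With `w j = ‖a j‖ ^ 2`, inserting the four moments leaves `0.57` minus this correction.
  have correction := power_sum_correction_nonneg (fun j => sq_nonneg ‖a j‖) ha
  simp only [← pow_mul, Nat.reduceMul] at correction h1 h2 h3 h4 ⊢
  rw [h1, h2, h3, h4]
  linarith

lemma khinchine_charSum_of_normalized {χ : AddChar G ℂ} (hχ : 4 < orderOf χ) {a : ι → ℂ}
    (ha : ∑ j, ‖a j‖ ^ 2 = 1) {p : ℝ} (hp : p ≤ 2) :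
    exp (-(0.57 * (1 - p / 2))) ≤ 𝔼 ε : ι → G, ‖∑ j, a j * χ (ε j)‖ ^ p := by
  have hmean : 𝔼 ε : ι → G, ‖∑ j, a j * χ (ε j)‖ ^ 2 = 1 := by
    simpa only [charSumMoment, mul_one, ha] using
      charSumMoment_one (show 1 < orderOf χ by omega) a univ
  refine (exp_neg_mul_le_expect_rpow (fun ε => sq_nonneg _) hmean
    (expect_normSq_mul_log_normSq_charSum_le hχ ha) (sub_nonneg.2 (by linarith))).trans_eq ?_
  refine expect_congr rfl fun ε _ => ?_
  rw [← rpow_natCast_mul (norm_nonneg _)]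
  congr 1
  push_cast
  ring

lemma khinchine_charSum {χ : AddChar G ℂ} (hχ : 4 < orderOf χ) (a : ι → ℂ) {p : ℝ} (hp0 : 0 < p)
    (hp : p ≤ 2) :
    exp (-(0.57 * (1 - p / 2))) * (∑ j, ‖a j‖ ^ 2) ^ (p / 2)
      ≤ 𝔼 ε : ι → G, ‖∑ j, a j * χ (ε j)‖ ^ p := by
  set σ := ∑ j, ‖a j‖ ^ 2
  have hσ0 : 0 ≤ σ := sum_nonneg fun j _ => sq_nonneg _
  rcases hσ0.eq_or_lt with hσ | hσ
  · rw [← hσ, zero_rpow (by positivity), mul_zero]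
    exact expect_nonneg fun ε _ => by positivity
  have hsqrt : (0 : ℝ) < √σ := sqrt_pos.2 hσ
  set b : ι → ℂ := fun j => a j / (√σ : ℝ)
  have hb : ∑ j, ‖b j‖ ^ 2 = 1 := by
    simp only [b, norm_div, Complex.norm_real, norm_of_nonneg hsqrt.le, div_pow, sq_sqrt hσ0,
      ← sum_div]
    exact div_self hσ.ne'
  have hscale (ε : ι → G) :
      ‖∑ j, a j * χ (ε j)‖ ^ p = ‖∑ j, b j * χ (ε j)‖ ^ p * σ ^ (p / 2) := by
    have : ∑ j, a j * χ (ε j) = (∑ j, b j * χ (ε j)) * (√σ : ℝ) := by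
      rw [sum_mul]
      refine sum_congr rfl fun j _ => ?_
      simp only [b]
      rw [mul_right_comm, div_mul_cancel₀ _ (Complex.ofReal_ne_zero.2 hsqrt.ne')]
    rw [this, norm_mul, Complex.norm_real, norm_of_nonneg hsqrt.le,
      mul_rpow (norm_nonneg _) hsqrt.le, sqrt_eq_rpow, ← rpow_mul hσ0, one_div_mul_eq_div]
  simp only [hscale, ← expect_mul]
  gcongr
  exact khinchine_charSum_of_normalized hχ hb hp

end CharacterSums

lemma orderOf_stdAddChar_zmod (n : ℕ) [NeZero n] :
    orderOf (ZMod.stdAddChar : AddChar (ZMod n) ℂ) = n := by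
  set χ : AddChar (ZMod n) ℂ := ZMod.stdAddChar
  refine Nat.dvd_antisymm (orderOf_dvd_of_pow_eq_one ?_) ?_
  · ext x
    rw [AddChar.pow_apply, ← AddChar.map_nsmul_eq_pow, nsmul_eq_mul, CharP.cast_eq_zero,
      zero_mul, AddChar.map_zero_eq_one, AddChar.one_apply]
  · have h : χ (orderOf χ • 1) = 1 := by
      rw [AddChar.map_nsmul_eq_pow, ← AddChar.pow_apply, pow_orderOf_eq_one, AddChar.one_apply]
    rw [nsmul_one, ← χ.map_zero_eq_one] at h
    exact (CharP.cast_eq_zero_iff (ZMod n) n _).1 (ZMod.injective_stdAddChar h)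

section Entropy

variable {α β : Type*} [Fintype α]

/-- The Shannon entropy (in nats) of a finitely supported mass function. It is used for
nonnegative `p` of total mass one. -/
noncomputable def shannonEntropy (p : α → ℝ) : ℝ :=
  ∑ x, negMulLog (p x)

/-- The push-forward of a weight function along `φ`: the sum of `f` over the fibre of `φ` above
`b`. If `f` is a probability mass function, this is the marginal distribution of `φ`. -/
def fiberSum [DecidableEq β] (φ : α → β) (f : α → ℝ) (b : β) : ℝ :=
  ∑ x with φ x = b, f x

lemma sum_mul_log_add_shannonEntropy_nonpos {p q : α → ℝ} (hp : ∀ x, 0 ≤ p x)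
    (hq : ∀ x, 0 ≤ q x) (hpq : ∀ x, q x = 0 → p x = 0) (hsum : ∑ x, q x ≤ ∑ x, p x) :
    ∑ x, p x * log (q x) + shannonEntropy p ≤ 0 := by
  have pointwise (x : α) : p x * log (q x) + negMulLog (p x) ≤ q x - p x := by
    rcases (hp x).eq_or_lt with h0 | hpos
    · simpa [← h0] using hq x
    have hqpos : 0 < q x := (hq x).lt_of_ne' fun h => hpos.ne' (hpq x h)
    calc p x * log (q x) + negMulLog (p x) = p x * log (q x / p x) := by
          rw [log_div hqpos.ne' hpos.ne', negMulLog]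
          ring
      _ ≤ p x * (q x / p x - 1) := by
          gcongr
          exact log_le_sub_one_of_pos (div_pos hqpos hpos)
      _ = q x - p x := by rw [mul_sub_one, mul_div_cancel₀ _ hpos.ne']
  have h := sum_le_sum fun x (_ : x ∈ univ) => pointwise x
  rw [sum_add_distrib, sum_sub_distrib] at h
  exact h.trans (sub_nonpos.2 hsum)

section FiberSum

variable [DecidableEq β] {φ : α → β} {f : α → ℝ}

lemma fiberSum_nonneg (hf : ∀ x, 0 ≤ f x) (b : β) : 0 ≤ fiberSum φ f b :=
  sum_nonneg fun x _ => hf x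

lemma le_fiberSum (hf : ∀ x, 0 ≤ f x) (x : α) : f x ≤ fiberSum φ f (φ x) :=
  single_le_sum (fun y _ => hf y) (mem_filter.2 ⟨mem_univ x, rfl⟩)

lemma sum_mul_comp_eq_sum_fiberSum_mul [Fintype β] (φ : α → β) (f : α → ℝ) (g : β → ℝ) :
    ∑ x, f x * g (φ x) = ∑ b, fiberSum φ f b * g b := by
  rw [← sum_fiberwise univ φ]
  refine sum_congr rfl fun b _ => ?_
  rw [fiberSum, sum_mul]
  exact sum_congr rfl fun x hx => by rw [(mem_filter.1 hx).2]

lemma sum_fiberSum [Fintype β] (φ : α → β) (f : α → ℝ) : ∑ b, fiberSum φ f b = ∑ x, f x :=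
  sum_fiberwise univ φ f

lemma fiberSum_eq_zero_of_fiberSum_eq_zero {p : α → ℝ} (hf : ∀ x, 0 ≤ f x)
    (hpf : ∀ x, f x = 0 → p x = 0) {b : β} (hb : fiberSum φ f b = 0) : fiberSum φ p b = 0 :=
  sum_eq_zero fun x hx => hpf x <| (sum_eq_zero_iff_of_nonneg fun y _ => hf y).1 hb x hx

lemma sum_mul_log_add_shannonEntropy_le_fiberSum [Fintype β] (φ : α → β) {p f : α → ℝ}
    (hp : ∀ x, 0 ≤ p x) (hf : ∀ x, 0 ≤ f x) (hpf : ∀ x, f x = 0 → p x = 0) :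
    ∑ x, p x * log (f x) + shannonEntropy p
      ≤ ∑ b, fiberSum φ p b * log (fiberSum φ f b) + shannonEntropy (fiberSum φ p) := by
  set P := fiberSum φ p
  set F := fiberSum φ f
  have hP := fiberSum_nonneg (φ := φ) hp
  have hF := fiberSum_nonneg (φ := φ) hf
  -- Gibbs' inequality against the law with the same `φ`-marginal as `p`, but distributed
  -- proportionally to `f` inside each fibre.
  set q : α → ℝ := fun x => f x * (P (φ x) / F (φ x))
  have hpos {x : α} (hx : p x ≠ 0) : 0 < f x ∧ 0 < P (φ x) ∧ 0 < F (φ x) := by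
    have hfx : 0 < f x := (hf x).lt_of_ne' (mt (hpf x) hx)
    exact ⟨hfx, ((hp x).lt_of_ne' hx).trans_le (le_fiberSum hp x), hfx.trans_le (le_fiberSum hf x)⟩
  have hq_sum : ∑ x, q x ≤ ∑ x, p x := by
    rw [sum_mul_comp_eq_sum_fiberSum_mul φ f fun b => P b / F b, ← sum_fiberSum φ p]
    refine sum_le_sum fun b _ => ?_
    rw [mul_div_left_comm]
    exact mul_le_of_le_one_right (hP b) (div_self_le_one _)
  have gibbs : ∑ x, p x * log (q x) + shannonEntropy p ≤ 0 := by
    refine sum_mul_log_add_shannonEntropy_nonpos hp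
      (fun x => mul_nonneg (hf x) (div_nonneg (hP _) (hF _))) (fun x hx => ?_) hq_sum
    by_contra hpx
    obtain ⟨hfx, hPx, hFx⟩ := hpos hpx
    exact (mul_pos hfx (div_pos hPx hFx)).ne' hx
  have expand : ∑ x, p x * log (q x)
      = ∑ x, p x * log (f x) + ∑ b, P b * log (P b) - ∑ b, P b * log (F b) := by
    rw [← sum_mul_comp_eq_sum_fiberSum_mul φ p fun b => log (P b),
      ← sum_mul_comp_eq_sum_fiberSum_mul φ p fun b => log (F b), ← sum_add_distrib,
      ← sum_sub_distrib]
    refine sum_congr rfl fun x _ => ?_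
    by_cases hpx : p x = 0
    · simp only [hpx, zero_mul, add_zero, sub_zero]
    obtain ⟨hfx, hPx, hFx⟩ := hpos hpx
    rw [log_mul hfx.ne' (div_pos hPx hFx).ne', log_div hPx.ne' hFx.ne']
    ring
  have hHP : shannonEntropy P = -∑ b, P b * log (P b) := by
    simp only [shannonEntropy, negMulLog, neg_mul, sum_neg_distrib]
  linarith

end FiberSum

lemma sum_mul_log_add_shannonEntropy_le_log_sum {p f : α → ℝ} (hp : ∀ x, 0 ≤ p x)
    (hp1 : ∑ x, p x = 1) (hf : ∀ x, 0 ≤ f x) (hpf : ∀ x, f x = 0 → p x = 0) :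
    ∑ x, p x * log (f x) + shannonEntropy p ≤ log (∑ x, f x) := by
  simpa [fiberSum, shannonEntropy, hp1] using
    sum_mul_log_add_shannonEntropy_le_fiberSum (fun _ => ()) hp hf hpf

lemma mul_sum_mul_log_add_shannonEntropy_of_rpow {f : α → ℝ} (hf : ∀ x, 0 ≤ f x) {ρ : ℝ}
    (hρ : ρ ≠ 0) (hS : 0 < ∑ x, f x ^ ρ) {p : α → ℝ}
    (hp : ∀ x, p x = f x ^ ρ / ∑ y, f y ^ ρ) :
    ρ * ∑ x, p x * log (f x) + shannonEntropy p = log (∑ x, f x ^ ρ) := by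
  have hp1 : ∑ x, p x = 1 := by simp only [hp, ← sum_div, div_self hS.ne']
  rw [shannonEntropy, mul_sum, ← sum_add_distrib, ← one_mul (log _), ← hp1, sum_mul]
  refine sum_congr rfl fun x _ => ?_
  rcases (hf x).eq_or_lt with h0 | hpos
  · simp [hp, ← h0, zero_rpow hρ]
  have hlog : log (p x) = ρ * log (f x) - log (∑ y, f y ^ ρ) := by
    rw [hp, log_div (rpow_pos_of_pos hpos ρ).ne' hS.ne', log_rpow hpos]
  rw [negMulLog, hlog]
  ring

lemma mul_sum_mul_log_add_shannonEntropy_le_log_sum_fiberSum_rpow [Fintype β] [DecidableEq β]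
    (φ : α → β) {p f : α → ℝ} (hp : ∀ x, 0 ≤ p x) (hp1 : ∑ x, p x = 1) (hf : ∀ x, 0 ≤ f x)
    (hpf : ∀ x, f x = 0 → p x = 0) {θ : ℝ} (hθ : 0 ≤ θ) :
    θ * (∑ x, p x * log (f x) + shannonEntropy p) + (1 - θ) * shannonEntropy (fiberSum φ p)
      ≤ log (∑ b, fiberSum φ f b ^ θ) := by
  have hF := fiberSum_nonneg (φ := φ) hf
  have variational := sum_mul_log_add_shannonEntropy_le_log_sum (fiberSum_nonneg (φ := φ) hp)
    ((sum_fiberSum φ p).trans hp1) (fun b => rpow_nonneg (hF b) θ) fun b hb =>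
      fiberSum_eq_zero_of_fiberSum_eq_zero hf hpf ((rpow_eq_zero_iff_of_nonneg (hF b)).1 hb).1
  have hlog : ∑ b, fiberSum φ p b * log (fiberSum φ f b ^ θ)
      = θ * ∑ b, fiberSum φ p b * log (fiberSum φ f b) := by
    rw [mul_sum]
    refine sum_congr rfl fun b _ => ?_
    rcases (hF b).eq_or_lt with h0 | hpos
    · rw [fiberSum_eq_zero_of_fiberSum_eq_zero hf hpf h0.symm, zero_mul, zero_mul, mul_zero]
    · rw [log_rpow hpos, mul_left_comm]
  have fibre := mul_le_mul_of_nonneg_left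
    (sum_mul_log_add_shannonEntropy_le_fiberSum φ hp hf hpf) hθ
  linarith

end Entropy

section CoordinateProjections

variable {ι : Type*} [Fintype ι] {n : ℕ}

lemma sum_prod_sum_update_rpow_le (hn : n ≠ 0) {f : (Fin (n + 1) → ι) → ℝ} (hf : ∀ i, 0 ≤ f i) :
    ∑ i, ∏ k, (∑ t, f (Function.update i k t)) ^ ((1 : ℝ) / n)
      ≤ (∑ i, f i) ^ (1 + (1 : ℝ) / n) := by
  let _ : MeasurableSpace ι := ⊤
  lift f to (Fin (n + 1) → ι) → NNReal using hf
  beta_reduce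
  have hn0 : (0 : ℝ) < n := by positivity
  have h0 : (1 : ℝ) - ((Fintype.card (Fin (n + 1)) : ℝ) - 1) * (1 / n) = 0 := by
    simp [hn0.ne']
  have gridLines := MeasureTheory.lintegral_mul_prod_lintegral_pow_le
    (A := fun _ : Fin (n + 1) => ι) (fun _ => MeasureTheory.Measure.count) (p := (1 : ℝ) / n)
    (by positivity) (by simp [hn0.ne']) (f := fun i => (f i : ENNReal)) (measurable_of_countable _)
  simp only [h0, MeasureTheory.lintegral_fintype, MeasureTheory.Measure.pi_singleton,
    MeasureTheory.Measure.count_singleton, prod_const_one, mul_one, ENNReal.rpow_zero, one_mul,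
    ← ENNReal.ofNNReal_finsetSum,
    ← ENNReal.coe_rpow_of_nonneg _ (show (0 : ℝ) ≤ 1 / n by positivity),
    ← ENNReal.coe_rpow_of_nonneg _ (show (0 : ℝ) ≤ 1 + 1 / n by positivity),
    ← ENNReal.ofNNReal_finsetProd, ENNReal.coe_le_coe] at gridLines
  exact_mod_cast gridLines

variable [DecidableEq ι]

lemma fiberSum_removeNth (k : Fin (n + 1)) (f : (Fin (n + 1) → ι) → ℝ) (i : Fin n → ι) :
    fiberSum k.removeNth f i = ∑ t, f (k.insertNth t i) := by
  refine (sum_bij (fun t _ => k.insertNth t i) ?_ ?_ ?_ ?_).symm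
  · exact fun t _ => mem_filter.2 ⟨mem_univ _, Fin.removeNth_insertNth (α := fun _ => ι) k t i⟩
  · exact fun t _ u _ h => (Fin.insertNth_injective2 h).1
  · exact fun j hj => ⟨j k, mem_univ _, by
      rw [← (mem_filter.1 hj).2, Fin.insertNth_self_removeNth]⟩
  · exact fun _ _ => rfl

lemma mul_shannonEntropy_le_sum_shannonEntropy_fiberSum (hn : n ≠ 0) {p : (Fin (n + 1) → ι) → ℝ}
    (hp : ∀ i, 0 ≤ p i) (hp1 : ∑ i, p i = 1) :
    n * shannonEntropy p ≤ ∑ k : Fin (n + 1), shannonEntropy (fiberSum k.removeNth p) := by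
  have hn0 : (0 : ℝ) < n := by positivity
  set P : Fin (n + 1) → (Fin n → ι) → ℝ := fun k => fiberSum k.removeNth p with hP
  have hP0 (k i) : 0 ≤ P k i := fiberSum_nonneg hp i
  have hpos {i} (hi : p i ≠ 0) (k : Fin (n + 1)) : 0 < P k (k.removeNth i) :=
    ((hp i).lt_of_ne' hi).trans_le (le_fiberSum hp i)
  -- Gibbs' inequality against the Loomis-Whitney product of the marginals.
  set q : (Fin (n + 1) → ι) → ℝ := fun i => ∏ k, P k (k.removeNth i) ^ ((1 : ℝ) / n) with hq
  have hq_sum : ∑ i, q i ≤ ∑ i, p i := by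
    simpa only [hq, hP, fiberSum_removeNth, Fin.insertNth_removeNth, hp1, one_rpow] using
      sum_prod_sum_update_rpow_le hn hp
  have gibbs : ∑ i, p i * log (q i) + shannonEntropy p ≤ 0 :=
    sum_mul_log_add_shannonEntropy_nonpos hp
      (fun i => prod_nonneg fun k _ => rpow_nonneg (hP0 k _) _)
      (fun i hi => by_contra fun hpi =>
        (prod_pos fun k _ => rpow_pos_of_pos (hpos hpi k) ((1 : ℝ) / n)).ne' hi) hq_sum
  have hlog (i) : p i * log (q i) = 1 / n * ∑ k, p i * log (P k (k.removeNth i)) := by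
    by_cases hpi : p i = 0
    · simp only [hpi, zero_mul, sum_const_zero, mul_zero]
    rw [hq, log_prod fun k _ => (rpow_pos_of_pos (hpos hpi k) _).ne', mul_sum, mul_sum]
    refine sum_congr rfl fun k _ => ?_
    rw [log_rpow (hpos hpi k), mul_left_comm]
  have hentropy (k) : ∑ i, p i * log (P k (k.removeNth i)) = -shannonEntropy (P k) := by
    rw [sum_mul_comp_eq_sum_fiberSum_mul k.removeNth p fun i => log (P k i)]
    simp only [shannonEntropy, negMulLog, neg_mul, sum_neg_distrib, neg_neg, hP]
  rw [sum_congr rfl fun i _ => hlog i, ← mul_sum, sum_comm, sum_congr rfl fun k _ => hentropy k,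
    sum_neg_distrib] at gibbs
  field_simp at gibbs
  linarith

lemma sum_mul_log_add_shannonEntropy_le_sum_log_sum_fiberSum_rpow (hn : n ≠ 0)
    {p f : (Fin (n + 1) → ι) → ℝ} (hp : ∀ i, 0 ≤ p i) (hp1 : ∑ i, p i = 1) (hf : ∀ i, 0 ≤ f i)
    (hpf : ∀ i, f i = 0 → p i = 0) {θ : ℝ} (hθ0 : 0 ≤ θ) (hθ1 : θ ≤ 1) :
    (n + 1) * θ * ∑ i, p i * log (f i) + (n + θ) * shannonEntropy p
      ≤ ∑ k : Fin (n + 1), log (∑ i, fiberSum k.removeNth f i ^ θ) := by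
  have directions := sum_le_sum fun (k : Fin (n + 1)) (_ : k ∈ univ) =>
    mul_sum_mul_log_add_shannonEntropy_le_log_sum_fiberSum_rpow k.removeNth hp hp1 hf hpf hθ0
  rw [sum_add_distrib, sum_const, card_univ, Fintype.card_fin, nsmul_eq_mul, ← mul_sum]
    at directions
  have shearer := mul_le_mul_of_nonneg_left
    (mul_shannonEntropy_le_sum_shannonEntropy_fiberSum hn hp hp1) (sub_nonneg.2 hθ1)
  push_cast at directions
  linarith

lemma sum_rpow_rpow_le_prod_sum_fiberSum_rpow (hn : n ≠ 0) {f : (Fin (n + 1) → ι) → ℝ}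
    (hf : ∀ i, 0 ≤ f i) {θ : ℝ} (hθ0 : 0 < θ) (hθ1 : θ ≤ 1) :
    (∑ i, f i ^ ((n + 1) * θ / (n + θ))) ^ (n + θ)
      ≤ ∏ k : Fin (n + 1), ∑ i, fiberSum k.removeNth f i ^ θ := by
  have hnθ : 0 < n + θ := by positivity
  set ρ : ℝ := (n + 1) * θ / (n + θ) with hρ
  have hρ0 : 0 < ρ := by positivity
  set S := ∑ i, f i ^ ρ
  set W : Fin (n + 1) → ℝ := fun k => ∑ i, fiberSum k.removeNth f i ^ θ
  have hterm (k : Fin (n + 1)) (i) : 0 ≤ fiberSum k.removeNth f i ^ θ :=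
    rpow_nonneg (fiberSum_nonneg hf i) θ
  have hS0 : 0 ≤ S := sum_nonneg fun i _ => rpow_nonneg (hf i) ρ
  rcases hS0.eq_or_lt with h0 | hSpos
  · rw [← h0, zero_rpow hnθ.ne']
    exact prod_nonneg fun k _ => sum_nonneg fun i _ => hterm k i
  have hWpos (k) : 0 < W k := by
    obtain ⟨i, -, hi⟩ := exists_ne_zero_of_sum_ne_zero hSpos.ne'
    have hfi : 0 < f i := (hf i).lt_of_ne' fun h => hi (by rw [h, zero_rpow hρ0.ne'])
    exact (rpow_pos_of_pos (hfi.trans_le (le_fiberSum hf i)) θ).trans_le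
      (single_le_sum (fun j _ => hterm k j) (mem_univ (k.removeNth i)))
  have blei := sum_mul_log_add_shannonEntropy_le_sum_log_sum_fiberSum_rpow hn
    (p := fun i => f i ^ ρ / S) (fun i => div_nonneg (rpow_nonneg (hf i) ρ) hS0)
    (by rw [← sum_div, div_self hSpos.ne'])
    hf (fun i hi => by simp only [hi, zero_rpow hρ0.ne', zero_div]) hθ0.le hθ1
  have optimal := mul_sum_mul_log_add_shannonEntropy_of_rpow hf hρ0.ne' hSpos fun _ => rfl
  rw [← log_le_log_iff (rpow_pos_of_pos hSpos _) (prod_pos fun k _ => hWpos k),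
    log_rpow hSpos, log_prod fun k _ => (hWpos k).ne', ← optimal, mul_add, ← mul_assoc, hρ,
    mul_div_cancel₀ _ hnθ.ne']
  exact blei

end CoordinateProjections

section BohnenblustHille

variable {ι : Type*} [Fintype ι] {n : ℕ}

lemma norm_curryMid_apply_le (U : ContinuousMultilinearMap ℂ (fun _ : Fin (n + 1) => ι → ℂ) ℂ)
    (k : Fin (n + 1)) {v : ι → ℂ} (hv : ∀ t, ‖v t‖ ≤ 1) : ‖U.curryMid k v‖ ≤ ‖U‖ := by
  rw [← ContinuousMultilinearMap.norm_curryMid k U]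
  exact (U.curryMid k).unit_le_opNorm v ((pi_norm_le_iff_of_nonneg zero_le_one).2 hv)

variable [DecidableEq ι]

/-- The coefficient of a multilinear form at a tuple of canonical basis vectors. -/
noncomputable def basisCoeff (U : ContinuousMultilinearMap ℂ (fun _ : Fin n => ι → ℂ) ℂ)
    (i : Fin n → ι) : ℂ :=
  U fun k => Pi.single (i k) 1

/-- The Bohnenblust–Hille quantity of a multilinear form on `ℓ_∞(ι)`, for an arbitrary finite
index set `ι`; `BHcomplex` is the case `ι = Fin N`. -/
noncomputable def bhQuantity (U : ContinuousMultilinearMap ℂ (fun _ : Fin n => ι → ℂ) ℂ) : ℝ :=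
  (∑ i, ‖basisCoeff U i‖ ^ ((2 * n : ℝ) / (n + 1))) ^ ((n + 1 : ℝ) / (2 * n))

lemma bhQuantity_nonneg (U : ContinuousMultilinearMap ℂ (fun _ : Fin n => ι → ℂ) ℂ) :
    0 ≤ bhQuantity U :=
  rpow_nonneg (sum_nonneg fun _ _ => rpow_nonneg (norm_nonneg _) _) _

lemma sum_norm_basisCoeff_rpow (hn : n ≠ 0)
    (U : ContinuousMultilinearMap ℂ (fun _ : Fin n => ι → ℂ) ℂ) :
    ∑ i, ‖basisCoeff U i‖ ^ ((2 * n : ℝ) / (n + 1)) = bhQuantity U ^ ((2 * n : ℝ) / (n + 1)) := by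
  rw [bhQuantity, ← rpow_mul (sum_nonneg fun _ _ => rpow_nonneg (norm_nonneg _) _),
    div_mul_div_cancel₀ (by positivity), div_self (by positivity), rpow_one]

lemma norm_basisCoeff_le (U : ContinuousMultilinearMap ℂ (fun _ : Fin n => ι → ℂ) ℂ)
    (i : Fin n → ι) : ‖basisCoeff U i‖ ≤ ‖U‖ := by
  refine U.unit_le_opNorm ((pi_norm_le_iff_of_nonneg zero_le_one).2 fun k => ?_)
  rw [Pi.norm_single, norm_one]

lemma basisCoeff_curryMid (U : ContinuousMultilinearMap ℂ (fun _ : Fin (n + 1) => ι → ℂ) ℂ)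
    (k : Fin (n + 1)) (v : ι → ℂ) (i : Fin n → ι) :
    basisCoeff (U.curryMid k v) i = ∑ t, v t * basisCoeff U (k.insertNth t i) := by
  conv_lhs => rw [pi_eq_sum_univ' v, map_sum]
  simp only [basisCoeff, map_smul, _root_.sum_apply, _root_.smul_apply, smul_eq_mul,
    ContinuousMultilinearMap.curryMid_apply]
  refine sum_congr rfl fun t _ => ?_
  congr 2
  refine Fin.insertNth_eq_iff.2 ⟨?_, ?_⟩
  · rw [Fin.insertNth_apply_same]
  · ext j : 1
    rw [Fin.removeNth, Fin.insertNth_apply_succAbove]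

lemma sum_norm_basisCoeff_insertNth_le
    (U : ContinuousMultilinearMap ℂ (fun _ : Fin (n + 1) => ι → ℂ) ℂ) (k : Fin (n + 1))
    (i : Fin n → ι) : ∑ t, ‖basisCoeff U (k.insertNth t i)‖ ≤ ‖U‖ := by
  set c : ι → ℂ := fun t => basisCoeff U (k.insertNth t i)
  set phase : ι → ℂ := fun t => conj (c t) / ‖c t‖
  have hphase (t) : ‖phase t‖ ≤ 1 := by
    simpa only [phase, norm_div, RCLike.norm_conj, Complex.norm_real, norm_norm] using
      div_self_le_one ‖c t‖
  have hmul (t) : phase t * c t = (‖c t‖ : ℝ) := by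
    simp only [phase]
    rw [div_mul_eq_mul_div, Complex.conj_mul', sq, mul_self_div_self]
  calc ∑ t, ‖c t‖ = ‖basisCoeff (U.curryMid k phase) i‖ := by
        rw [basisCoeff_curryMid, sum_congr rfl fun t _ => hmul t, ← Complex.ofReal_sum,
          Complex.norm_real, norm_of_nonneg (sum_nonneg fun t _ => norm_nonneg _)]
    _ ≤ ‖U‖ := (norm_basisCoeff_le _ i).trans (norm_curryMid_apply_le U k hphase)

lemma bhQuantity_le_norm_of_linear (U : ContinuousMultilinearMap ℂ (fun _ : Fin 1 => ι → ℂ) ℂ) :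
    bhQuantity U ≤ ‖U‖ := by
  have h : bhQuantity U = ∑ i, ‖basisCoeff U i‖ := by
    norm_num [bhQuantity]
  rw [h, ← (Fin.insertNthEquiv (fun _ : Fin 1 => ι) 0).sum_comp, Fintype.sum_prod_type_right,
    Fintype.sum_unique]
  exact sum_norm_basisCoeff_insertNth_le U 0 _

lemma exp_mul_sum_fiberSum_rpow_le_expect {G : Type*} [AddCommGroup G] [Fintype G]
    {χ : AddChar G ℂ} (hχ : 4 < orderOf χ) {p : ℝ} (hp0 : 0 < p) (hp : p ≤ 2)
    (U : ContinuousMultilinearMap ℂ (fun _ : Fin (n + 1) => ι → ℂ) ℂ) (k : Fin (n + 1)) :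
    exp (-(0.57 * (1 - p / 2)))
        * ∑ i, fiberSum k.removeNth (fun j => ‖basisCoeff U j‖ ^ 2) i ^ (p / 2)
      ≤ 𝔼 ε : ι → G, ∑ i, ‖basisCoeff (U.curryMid k fun t => χ (ε t)) i‖ ^ p := by
  rw [mul_sum, expect_sum_comm]
  refine sum_le_sum fun i _ => ?_
  simpa only [fiberSum_removeNth, basisCoeff_curryMid, mul_comm (χ _)] using
    khinchine_charSum hχ (fun t => basisCoeff U (k.insertNth t i)) hp0 hp

lemma sum_fiberSum_rpow_le_of_forall_bhQuantity_le (hn : n ≠ 0) {C : ℝ} (hC : 0 ≤ C)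
    (hbh : ∀ V : ContinuousMultilinearMap ℂ (fun _ : Fin n => ι → ℂ) ℂ, bhQuantity V ≤ C * ‖V‖)
    (U : ContinuousMultilinearMap ℂ (fun _ : Fin (n + 1) => ι → ℂ) ℂ) (k : Fin (n + 1)) :
    ∑ i, fiberSum k.removeNth (fun j => ‖basisCoeff U j‖ ^ 2) i ^ ((n : ℝ) / (n + 1))
      ≤ exp (0.57 / (n + 1)) * (C * ‖U‖) ^ ((2 * n : ℝ) / (n + 1)) := by
  set p : ℝ := (2 * n : ℝ) / (n + 1) with hp
  have hp0 : 0 < p := by positivity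
  have hp2 : p ≤ 2 := by
    rw [hp, div_le_iff₀ (by positivity)]
    linarith
  have hexp : 0.57 * (1 - p / 2) = 0.57 / (n + 1) := by
    rw [hp]
    field_simp
    ring
  have hhalf : (n : ℝ) / (n + 1) = p / 2 := by
    rw [hp]
    ring
  have hχ : 4 < orderOf (ZMod.stdAddChar : AddChar (ZMod 5) ℂ) := by
    rw [orderOf_stdAddChar_zmod]
    norm_num
  have khinchine := exp_mul_sum_fiberSum_rpow_le_expect hχ hp0 hp2 U k
  rw [hexp, exp_neg, inv_mul_le_iff₀ (exp_pos _), ← hhalf] at khinchine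
  refine khinchine.trans ?_
  gcongr
  refine expect_le univ_nonempty fun ε _ => ?_
  set V := U.curryMid k fun t => ZMod.stdAddChar (ε t)
  have hV : ‖V‖ ≤ ‖U‖ := norm_curryMid_apply_le U k fun t => (AddChar.norm_apply _ _).le
  calc ∑ i, ‖basisCoeff V i‖ ^ p = bhQuantity V ^ p := by
        rw [hp, sum_norm_basisCoeff_rpow hn]
    _ ≤ (C * ‖U‖) ^ p := by
        have hCU : bhQuantity V ≤ C * ‖U‖ := (hbh V).trans (by gcongr)
        exact rpow_le_rpow (bhQuantity_nonneg V) hCU hp0.le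

lemma bhQuantity_le_of_forall_bhQuantity_le (hn : n ≠ 0) {C : ℝ} (hC : 0 ≤ C)
    (hbh : ∀ V : ContinuousMultilinearMap ℂ (fun _ : Fin n => ι → ℂ) ℂ, bhQuantity V ≤ C * ‖V‖)
    (U : ContinuousMultilinearMap ℂ (fun _ : Fin (n + 1) => ι → ℂ) ℂ) :
    bhQuantity U ≤ exp (0.285 / n) * C * ‖U‖ := by
  set θ : ℝ := (n : ℝ) / (n + 1) with hθ
  have blei := sum_rpow_rpow_le_prod_sum_fiberSum_rpow hn (f := fun i => ‖basisCoeff U i‖ ^ 2)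
    (fun i => sq_nonneg _) (θ := θ) (by positivity)
    (div_le_one_of_le₀ (by linarith) (by positivity))
  have hleft : (∑ i, (‖basisCoeff U i‖ ^ 2) ^ ((n + 1) * θ / (n + θ))) ^ (n + θ)
      = bhQuantity U ^ (2 * n) := by
    have hexp : ((2 : ℕ) : ℝ) * ((n + 1) * θ / (n + θ))
        = 2 * (n + 1 : ℕ) / ((n + 1 : ℕ) + 1) := by
      rw [hθ]
      push_cast
      field_simp
    simp only [← rpow_natCast_mul (norm_nonneg _), hexp]
    rw [sum_norm_basisCoeff_rpow n.succ_ne_zero, ← rpow_mul (bhQuantity_nonneg U), ← rpow_natCast]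
    congr 1
    rw [hθ]
    push_cast
    field_simp
  have hright : ∏ k : Fin (n + 1),
        ∑ i, fiberSum k.removeNth (fun j => ‖basisCoeff U j‖ ^ 2) i ^ θ
      ≤ (exp (0.285 / n) * C * ‖U‖) ^ (2 * n) := by
    refine (prod_le_prod (fun k _ => sum_nonneg fun i _ =>
      rpow_nonneg (fiberSum_nonneg (fun j => sq_nonneg _) i) _) fun k _ =>
      sum_fiberSum_rpow_le_of_forall_bhQuantity_le hn hC hbh U k).trans_eq ?_
    have hCU : 0 ≤ C * ‖U‖ := by positivity
    rw [prod_const, card_univ, Fintype.card_fin, mul_pow, mul_assoc, mul_pow, ← exp_nat_mul,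
      ← exp_nat_mul, ← rpow_mul_natCast hCU, ← rpow_natCast]
    congr 2 <;> push_cast <;> field_simp
    norm_num
  rw [hleft] at blei
  exact le_of_pow_le_pow_left₀ (by positivity) (by positivity) (blei.trans hright)

theorem stmt15_general (U : ContinuousMultilinearMap ℂ (fun _ : Fin (n + 1) => ι → ℂ) ℂ) :
    bhQuantity U ≤ exp (0.285 * harmonic n) * ‖U‖ := by
  induction n with
  | zero => simpa using bhQuantity_le_norm_of_linear U
  | succ n ih =>
    refine (bhQuantity_le_of_forall_bhQuantity_le n.succ_ne_zero (exp_nonneg _) ih U).trans_eq ?_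
    rw [← exp_add, harmonic_succ]
    push_cast
    congr 2
    ring

end BohnenblustHille

lemma exp_mul_harmonic_le {m : ℕ} (hm : 2 ^ 25 ≤ m) :
    exp (0.285 * harmonic m) ≤ 0.99135459597 * (m : ℝ) ^ (0.304975 : ℝ) := by
  have hm' : (2 : ℝ) ^ 25 ≤ m := mod_cast hm
  have hm0 : (0 : ℝ) < m := by linarith
  have hlogm : 25 * log 2 ≤ log m := by
    simpa only [log_pow, Nat.cast_ofNat] using log_le_log (by norm_num) hm'
  have hconst : -0.01 ≤ log 0.99135459597 :=
    le_trans (by norm_num) (one_sub_inv_le_log_of_pos (by norm_num))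
  calc exp (0.285 * harmonic m) ≤ exp (log 0.99135459597 + log m * 0.304975) := by
        have hharmonic := harmonic_le_one_add_log m
        have hlog2 := log_two_gt_d9
        gcongr
        linarith
    _ = 0.99135459597 * (m : ℝ) ^ (0.304975 : ℝ) := by
        rw [exp_add, exp_log (by norm_num), rpow_def_of_pos hm0]

theorem stmt15 (n : ℕ) (hn : 2 ^ 25 < n) (N : ℕ) (hN : 0 < N)
    (U : ContinuousMultilinearMap ℂ (fun _ : Fin n => (Fin N → ℂ)) ℂ) :
    BHcomplex n N U ≤ 0.99135459597 * ((n : ℝ) - 1) ^ (0.304975 : ℝ) * ‖U‖ := by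
  obtain ⟨m, rfl⟩ := Nat.exists_eq_add_one_of_ne_zero (Nat.ne_of_gt (Nat.zero_lt_of_lt hn))
  rw [Nat.cast_succ, add_sub_cancel_right]
  exact (stmt15_general U).trans
    (mul_le_mul_of_nonneg_right (exp_mul_harmonic_le (Nat.lt_succ_iff.1 hn)) (norm_nonneg U))
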